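/- Let n ≥ 2, and let f be a holomorphic function on a neighborhood of the origin of ℂⁿ such that |f|² e^{−ψ} is Lebesgue integrable on some neighborhood of the origin. Let γ be a nonnegative integer with (γ+1)/p_n < 1, and define ψ̃ on ℂ^{n−1} by ψ̃(w₁,…,w_{n−1}) = max_{1≤j≤n−1} 2 p_j (1 − (γ+1)/p_n) log|w_j|. Then for every integer σ with 0 ≤ σ ≤ γ, the holomorphic function (w₁,…,w_{n−1}) ↦ (∂^σ f/∂w_n^σ)(w₁,…,w_{n−1},0) has the property that its squared modulus times e^{−ψ̃} is Lebesgue integrable on some neighborhood of the origin of ℂ^{n−1}. -/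

import Mathlib

open MeasureTheory Filter

/-- `psi p w = max_j 2 p_j log |w_j|`. -/
noncomputable def psi {n : ℕ} (p : Fin n → ℝ) (w : Fin n → ℂ) : ℝ :=
  ⨆ j, 2 * p j * Real.log ‖w j‖


lemma circ_bound (f : ℂ → ℂ) (ρ : ℝ) (hρ : 0 < ρ) (σ : ℕ)
    (hf : DifferentiableOn ℂ f (Metric.closedBall 0 ρ)) :
    ‖iteratedDeriv σ f 0‖ ^ 2 * (2 * Real.pi / (σ.factorial : ℝ) ^ 2 * ρ ^ (2 * σ)) ≤
      ∫ θ in (-Real.pi)..Real.pi, ‖f (circleMap 0 ρ θ)‖ ^ 2 := by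
  have hper : ∫ θ in (-Real.pi)..Real.pi, ‖f (circleMap 0 ρ θ)‖ ^ 2 =
      ∫ θ in (0 : ℝ)..(2 * Real.pi), ‖f (circleMap 0 ρ θ)‖ ^ 2 := by
    have hp : Function.Periodic (fun θ : ℝ => ‖f (circleMap 0 ρ θ)‖ ^ 2) (2 * Real.pi) := by
      intro θ
      simp only [periodic_circleMap 0 ρ θ]
    have := hp.intervalIntegral_add_eq (-Real.pi) 0
    rw [zero_add] at this
    rw [← this]
    congr 1
    ring
  rw [hper]
  have hcont : Continuous (fun θ : ℝ => ‖f (circleMap 0 ρ θ)‖) := by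
    refine continuous_norm.comp (hf.continuousOn.comp_continuous (continuous_circleMap 0 ρ) ?_)
    intro θ
    exact circleMap_mem_closedBall 0 hρ.le θ
  have h1 := hf.circleIntegral_one_div_sub_center_pow_smul hρ σ
  have h2 : ‖(2 * Real.pi * Complex.I / σ.factorial : ℂ) • iteratedDeriv σ f 0‖ ≤
      ∫ θ in (0 : ℝ)..(2 * Real.pi), (ρ ^ σ)⁻¹ * ‖f (circleMap 0 ρ θ)‖ := by
    rw [← h1, circleIntegral]
    refine (intervalIntegral.norm_integral_le_integral_norm Real.two_pi_pos.le).trans (le_of_eq ?_)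
    congr 1
    ext θ
    simp [abs_of_pos hρ]
    field_simp
    ring
  rw [intervalIntegral.integral_const_mul] at h2
  set B := ∫ θ in (0 : ℝ)..(2 * Real.pi), ‖f (circleMap 0 ρ θ)‖ with hB
  set Q := ∫ θ in (0 : ℝ)..(2 * Real.pi), ‖f (circleMap 0 ρ θ)‖ ^ 2 with hQ
  have h3 : B ^ 2 ≤ 2 * Real.pi * Q := by
    have h4 : 0 ≤ ∫ θ in (0 : ℝ)..(2 * Real.pi),
        (‖f (circleMap 0 ρ θ)‖ - B / (2 * Real.pi)) ^ 2 :=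
      intervalIntegral.integral_nonneg Real.two_pi_pos.le (fun _ _ => sq_nonneg _)
    have h5 : ∫ θ in (0 : ℝ)..(2 * Real.pi),
        (‖f (circleMap 0 ρ θ)‖ - B / (2 * Real.pi)) ^ 2 =
        Q - 2 * (B / (2 * Real.pi)) * B + 2 * Real.pi * (B / (2 * Real.pi)) ^ 2 := by
      have : ∀ θ : ℝ, (‖f (circleMap 0 ρ θ)‖ - B / (2 * Real.pi)) ^ 2 =
        ‖f (circleMap 0 ρ θ)‖ ^ 2 - 2 * (B / (2 * Real.pi)) * ‖f (circleMap 0 ρ θ)‖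
          + (B / (2 * Real.pi)) ^ 2 := fun θ => by ring
      simp_rw [this]
      rw [intervalIntegral.integral_add, intervalIntegral.integral_sub,
        intervalIntegral.integral_const_mul, intervalIntegral.integral_const]
      · rw [← hB, ← hQ]; simp
      all_goals exact Continuous.intervalIntegrable (by fun_prop) _ _
    rw [h5] at h4
    have hpi := Real.pi_pos
    have h6 : Q - 2 * (B / (2 * Real.pi)) * B + 2 * Real.pi * (B / (2 * Real.pi)) ^ 2
        = (2 * Real.pi * Q - B ^ 2) / (2 * Real.pi) := by
      field_simp
      ring
    rw [h6, div_nonneg_iff] at h4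
    rcases h4 with h4 | h4
    · linarith [h4.1]
    · linarith [h4.2]
  have h7 : ‖(2 * Real.pi * Complex.I / σ.factorial : ℂ) • iteratedDeriv σ f 0‖ =
      2 * Real.pi / σ.factorial * ‖iteratedDeriv σ f 0‖ := by
    simp [abs_of_pos Real.pi_pos]
  rw [h7] at h2
  set D := ‖iteratedDeriv σ f 0‖
  have hD : 0 ≤ D := norm_nonneg _
  have hfac : (0 : ℝ) < σ.factorial := by exact_mod_cast σ.factorial_pos
  have hpi := Real.pi_pos
  have h8 : 2 * Real.pi / σ.factorial * D * ρ ^ σ ≤ B := by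
    calc _ ≤ ((ρ ^ σ)⁻¹ * B) * ρ ^ σ := by gcongr
      _ = B := by field_simp
  have h9 : (2 * Real.pi / σ.factorial * D * ρ ^ σ) ^ 2 ≤ 2 * Real.pi * Q :=
    (pow_le_pow_left₀ (by positivity) h8 2).trans h3
  have h10 : (2 * Real.pi / σ.factorial * D * ρ ^ σ) ^ 2 =
      2 * Real.pi * (D ^ 2 * (2 * Real.pi / (σ.factorial : ℝ) ^ 2 * ρ ^ (2 * σ))) := by
    rw [pow_mul']
    field_simp
  rw [h10] at h9
  exact le_of_mul_le_mul_left h9 (by positivity)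

def annul (r : ℝ) : Set ℂ := {z | r / 2 < ‖z‖ ∧ ‖z‖ < r}

lemma annul_open (r : ℝ) : IsOpen (annul r) :=
  (isOpen_lt continuous_const continuous_norm).inter (isOpen_lt continuous_norm continuous_const)

lemma annul_bound (f : ℂ → ℂ) (r : ℝ) (hr : 0 < r) (σ : ℕ)
    (hf : DifferentiableOn ℂ f (Metric.closedBall 0 r)) :
    ‖iteratedDeriv σ f 0‖ ^ 2 *
      (2 * Real.pi / (σ.factorial : ℝ) ^ 2 / 2 ^ (2 * σ + 2) * r ^ (2 * σ + 2)) ≤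
      ∫ z in annul r, ‖f z‖ ^ 2 := by
  have hsymm : ∀ q : ℝ × ℝ, Complex.polarCoord.symm q = circleMap 0 q.1 q.2 := by
    intro q
    simp [circleMap, Complex.exp_mul_I]
  have hcm : Continuous (fun q : ℝ × ℝ => circleMap 0 q.1 q.2) := by
    unfold circleMap; fun_prop
  have hcont : ContinuousOn (fun q : ℝ × ℝ => q.1 * ‖f (circleMap 0 q.1 q.2)‖ ^ 2)
      (Set.Icc (r/2) r ×ˢ Set.Icc (-Real.pi) Real.pi) := by
    refine continuousOn_fst.mul (((hf.continuousOn.comp hcm.continuousOn ?_).norm).pow 2)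
    rintro ⟨a, b⟩ ⟨⟨h1, h2⟩, -⟩
    have : 0 ≤ a := by linarith
    simpa [abs_of_nonneg this] using h2
  have hI : IntegrableOn (fun q : ℝ × ℝ => q.1 * ‖f (circleMap 0 q.1 q.2)‖ ^ 2)
      (Set.Ioo (r/2) r ×ˢ Set.Ioc (-Real.pi) Real.pi) (volume.prod volume) :=
    (hcont.integrableOn_compact (isCompact_Icc.prod isCompact_Icc)).mono_set
      (Set.prod_mono Set.Ioo_subset_Icc_self Set.Ioc_subset_Icc_self)
  have e1 : ∫ z in annul r, ‖f z‖ ^ 2 =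
      ∫ q in Set.Ioo (r/2) r ×ˢ Set.Ioo (-Real.pi) Real.pi,
        q.1 * ‖f (circleMap 0 q.1 q.2)‖ ^ 2 := by
    rw [← integral_indicator (annul_open r).measurableSet,
      ← Complex.integral_comp_polarCoord_symm, ← integral_indicator polarCoord.open_target.measurableSet,
      ← integral_indicator (measurableSet_Ioo.prod measurableSet_Ioo)]
    congr 1
    ext ⟨a, b⟩
    have hm : ((a, b) ∈ Set.Ioo (r/2) r ×ˢ Set.Ioo (-Real.pi) Real.pi) ↔
        (a, b) ∈ polarCoord.target ∧ circleMap 0 a b ∈ annul r := by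
      simp only [Set.mem_prod, polarCoord_target, annul, Set.mem_Ioo, Set.mem_Ioi, Set.mem_ofPred_eq,
        norm_circleMap_zero]
      constructor
      · rintro ⟨⟨h1, h2⟩, h3⟩
        have : 0 < a := by linarith
        rw [abs_of_pos this]; tauto
      · rintro ⟨⟨h1, h2⟩, h3⟩
        rw [abs_of_pos h1] at h3; tauto
    simp only [Set.indicator_apply, hm, hsymm]
    split_ifs <;> simp_all
  have e2 : ∫ q in Set.Ioo (r/2) r ×ˢ Set.Ioo (-Real.pi) Real.pi,
        q.1 * ‖f (circleMap 0 q.1 q.2)‖ ^ 2 =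
      ∫ a in Set.Ioo (r/2) r, ∫ b in Set.Ioc (-Real.pi) Real.pi, a * ‖f (circleMap 0 a b)‖ ^ 2 := by
    rw [← setIntegral_prod _ hI]
    refine setIntegral_congr_set ?_
    exact Measure.set_prod_ae_eq (ae_eq_refl _) Ioo_ae_eq_Ioc
  rw [e1, e2]
  have hI2 : IntegrableOn (fun a : ℝ => ∫ b in Set.Ioc (-Real.pi) Real.pi, a * ‖f (circleMap 0 a b)‖ ^ 2)
      (Set.Ioo (r/2) r) := by
    rw [IntegrableOn, ← Measure.prod_restrict] at hI
    exact hI.integral_prod_left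
  have hpi := Real.pi_pos
  set D := ‖iteratedDeriv σ f 0‖
  have hle : ∫ a in Set.Ioo (r/2) r, (D ^ 2 *
      (2 * Real.pi / (σ.factorial : ℝ) ^ 2 * (r/2) ^ (2 * σ + 1))) ≤
      ∫ a in Set.Ioo (r/2) r, ∫ b in Set.Ioc (-Real.pi) Real.pi, a * ‖f (circleMap 0 a b)‖ ^ 2 := by
    refine setIntegral_mono_on (integrableOn_const (by simp)) hI2 measurableSet_Ioo ?_
    rintro a ⟨h1, h2⟩
    have ha : 0 < a := by linarith
    rw [integral_const_mul, ← intervalIntegral.integral_of_le (by linarith)]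
    have := circ_bound f a ha σ (hf.mono (Metric.closedBall_subset_closedBall h2.le))
    calc D ^ 2 * (2 * Real.pi / (σ.factorial : ℝ) ^ 2 * (r/2) ^ (2 * σ + 1))
        ≤ D ^ 2 * (2 * Real.pi / (σ.factorial : ℝ) ^ 2 * a ^ (2 * σ + 1)) := by gcongr
      _ = a * (D ^ 2 * (2 * Real.pi / (σ.factorial : ℝ) ^ 2 * a ^ (2 * σ))) := by ring
      _ ≤ _ := by gcongr
  refine le_trans (le_of_eq ?_) hle
  rw [setIntegral_const]
  simp only [measureReal_def, Real.volume_Ioo, smul_eq_mul]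
  rw [ENNReal.toReal_ofReal (by linarith)]
  rw [div_pow]
  field_simp
  ring

lemma slice_bound (n : ℕ) (hn : 1 ≤ n) (p : Fin (n + 1) → ℝ) (hp : ∀ j, 0 < p j)
    (f : (Fin (n + 1) → ℂ) → ℂ) (γ σ : ℕ) (hσ : σ ≤ γ)
    (ε : ℝ) (hε : 0 < ε) (hε1 : ε < 1) (w : Fin n → ℂ) (hw0 : ∀ j, w j ≠ 0)
    (hw : ∀ j, ‖w j‖ < Real.exp (p (Fin.last n) * Real.log ε / p j.castSucc))
    (hγ : ((γ : ℝ) + 1) / p (Fin.last n) < 1)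
    (hf : DifferentiableOn ℂ (fun z : ℂ => f (Fin.snoc w z)) (Metric.ball 0 ε))
    (hI : IntegrableOn (fun z : ℂ => ‖f (Fin.snoc w z)‖ ^ 2 *
      Real.exp (-psi p (Fin.snoc w z))) (Metric.ball 0 ε)) :
    ‖iteratedDeriv σ (fun z : ℂ => f (Fin.snoc w z)) 0‖ ^ 2 *
          Real.exp (-(⨆ j : Fin n,
            2 * p j.castSucc * (1 - ((γ : ℝ) + 1) / p (Fin.last n)) * Real.log ‖w j‖)) ≤
      (2 * Real.pi / (σ.factorial : ℝ) ^ 2 / 2 ^ (2 * σ + 2))⁻¹ *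
      ∫ z in Metric.ball 0 ε, ‖f (Fin.snoc w z)‖ ^ 2 * Real.exp (-psi p (Fin.snoc w z)) := by
  have : Nonempty (Fin n) := ⟨⟨0, hn⟩⟩
  set P := p (Fin.last n) with hP
  have hPpos : 0 < P := hp _
  set S := ⨆ j : Fin n, 2 * p j.castSucc * Real.log ‖w j‖ with hS
  have hbdd : BddAbove (Set.range fun j : Fin n => 2 * p j.castSucc * Real.log ‖w j‖) :=
    (Set.finite_range _).bddAbove
  have hSa : (⨆ j : Fin n, 2 * p j.castSucc * (1 - ((γ : ℝ) + 1) / P) * Real.log ‖w j‖) =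
      (1 - ((γ : ℝ) + 1) / P) * S := by
    rw [hS, Real.mul_iSup_of_nonneg (by linarith)]
    congr 1; ext j; ring
  rw [hSa]
  have hSlt : S < 2 * P * Real.log ε := by
    obtain ⟨j, hj⟩ := exists_eq_ciSup_of_finite (f := fun j : Fin n => 2 * p j.castSucc * Real.log ‖w j‖)
    rw [hS, ← hj]
    have h1 : Real.log ‖w j‖ < P * Real.log ε / p j.castSucc := by
      rw [Real.log_lt_iff_lt_exp (norm_pos_iff.2 (hw0 j))]
      exact hw j
    rw [lt_div_iff₀ (hp _)] at h1
    linarith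
  have hlog : Real.log ε < 0 := Real.log_neg hε hε1
  have hS0 : S < 0 := hSlt.trans (by nlinarith)
  set r := Real.exp (S / (2 * P)) with hr
  have hrpos : 0 < r := Real.exp_pos _
  have hrε : r < ε := by
    rw [hr, ← Real.lt_log_iff_exp_lt hε, div_lt_iff₀ (by positivity)]
    linarith
  have hsub : annul r ⊆ Metric.ball 0 ε := by
    rintro z ⟨-, h2⟩
    simpa using h2.trans hrε
  have hA := annul_bound _ r hrpos σ (hf.mono (Metric.closedBall_subset_ball hrε))
  have hI2 : IntegrableOn (fun z : ℂ => ‖f (Fin.snoc w z)‖ ^ 2) (annul r) := by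
    have hc : ContinuousOn (fun z : ℂ => ‖f (Fin.snoc w z)‖ ^ 2) (Metric.closedBall 0 r) :=
      ((hf.continuousOn.mono (Metric.closedBall_subset_ball hrε)).norm).pow 2
    refine (hc.integrableOn_compact (isCompact_closedBall _ _)).mono_set ?_
    rintro z ⟨-, h2⟩
    simpa using h2.le
  have hpsi : ∀ z ∈ annul r, psi p (Fin.snoc w z) ≤ S := by
    rintro z ⟨h1, h2⟩
    have hz : 0 < ‖z‖ := by linarith
    refine ciSup_le ?_
    intro j
    refine Fin.lastCases ?_ (fun i => ?_) j
    · rw [Fin.snoc_last]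
      have : Real.log ‖z‖ < S / (2 * P) := by
        rw [Real.log_lt_iff_lt_exp hz]; exact h2
      rw [lt_div_iff₀ (by positivity)] at this
      linarith
    · rw [Fin.snoc_castSucc]
      exact le_ciSup hbdd i
  have hB : Real.exp (-S) * ∫ z in annul r, ‖f (Fin.snoc w z)‖ ^ 2 ≤
      ∫ z in Metric.ball 0 ε, ‖f (Fin.snoc w z)‖ ^ 2 * Real.exp (-psi p (Fin.snoc w z)) := by
    rw [← integral_const_mul]
    calc _ ≤ ∫ z in annul r, ‖f (Fin.snoc w z)‖ ^ 2 * Real.exp (-psi p (Fin.snoc w z)) := by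
          refine setIntegral_mono_on (hI2.const_mul _) (hI.mono_set hsub)
            (annul_open r).measurableSet ?_
          intro z hz
          rw [mul_comm]
          have := hpsi z hz
          gcongr
      _ ≤ _ := setIntegral_mono_set hI (ae_of_all _ fun z => by positivity) hsub.eventuallyLE
  have hE : Real.exp (-((1 - ((γ : ℝ) + 1) / P) * S)) ≤ Real.exp (-S) * r ^ (2 * σ + 2) := by
    rw [hr, ← Real.exp_nat_mul, ← Real.exp_add]
    refine Real.exp_le_exp.2 ?_
    have e : -S + ((2 * σ + 2 : ℕ) : ℝ) * (S / (2 * P)) - -((1 - ((γ : ℝ) + 1) / P) * S) =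
      (γ - σ) * (-S) / P := by
      push_cast
      field_simp
      ring
    have hc : (σ : ℝ) ≤ γ := by exact_mod_cast hσ
    have : 0 ≤ (γ - σ) * (-S) / P :=
      div_nonneg (mul_nonneg (by linarith) (by linarith)) hPpos.le
    linarith
  set c := 2 * Real.pi / (σ.factorial : ℝ) ^ 2 / 2 ^ (2 * σ + 2) with hc
  have hcpos : 0 < c := by positivity
  rw [le_inv_mul_iff₀ hcpos]
  set D := ‖iteratedDeriv σ (fun z : ℂ => f (Fin.snoc w z)) 0‖
  calc _ ≤ c * (D ^ 2 * (Real.exp (-S) * r ^ (2 * σ + 2))) := by gcongr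
    _ = Real.exp (-S) * (D ^ 2 * (c * r ^ (2 * σ + 2))) := by ring
    _ ≤ _ := by gcongr
    _ ≤ _ := hB

theorem stmt_9 (n : ℕ) (hn : 1 ≤ n) (p : Fin (n + 1) → ℝ) (hp : ∀ j, 0 < p j)
    (f : (Fin (n + 1) → ℂ) → ℂ) (Ω : Set (Fin (n + 1) → ℂ))
    (hΩ : Ω ∈ nhds (0 : Fin (n + 1) → ℂ)) (hf : DifferentiableOn ℂ f Ω)
    (hint : ∃ U ∈ nhds (0 : Fin (n + 1) → ℂ), U ⊆ Ω ∧
      IntegrableOn (fun w => ‖f w‖ ^ 2 * Real.exp (-psi p w)) U volume)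
    (γ : ℕ) (hγ : ((γ : ℝ) + 1) / p (Fin.last n) < 1)
    (σ : ℕ) (hσ : σ ≤ γ) :
    ∃ V ∈ nhds (0 : Fin n → ℂ),
      IntegrableOn (fun w' : Fin n → ℂ =>
          ‖iteratedDeriv σ (fun z : ℂ => f (Fin.snoc w' z)) 0‖ ^ 2 *
          Real.exp (-(⨆ j : Fin n,
            2 * p j.castSucc * (1 - ((γ : ℝ) + 1) / p (Fin.last n)) * Real.log ‖w' j‖)))
        V volume := by
  obtain ⟨U, hU, hUΩ, hUint⟩ := hint
  obtain ⟨ε₀, hε₀, hball₀⟩ := Metric.mem_nhds_iff.1 hU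
  obtain ⟨ε, hε, hε1, hball⟩ : ∃ ε : ℝ, 0 < ε ∧ ε < 1 ∧
      Metric.ball (0 : Fin (n + 1) → ℂ) ε ⊆ U :=
    ⟨min ε₀ (1/2), by positivity, (min_le_right _ _).trans_lt (by norm_num),
      (Metric.ball_subset_ball (min_le_left _ _)).trans hball₀⟩
  set V : Set (Fin n → ℂ) := {w | ∀ j, ‖w j‖ < min ε
    (Real.exp (p (Fin.last n) * Real.log ε / p j.castSucc))} with hV
  have hVopen : IsOpen V := by
    rw [hV, Set.ofPred_forall]
    exact isOpen_iInter_of_finite fun j =>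
      isOpen_lt (continuous_norm.comp (continuous_apply j)) continuous_const
  have hV0 : (0 : Fin n → ℂ) ∈ V := by
    intro j
    simp [hε, Real.exp_pos]
  have hmem : ∀ (w : Fin n → ℂ) (z : ℂ), (Fin.snoc w z : Fin (n + 1) → ℂ) ∈ Metric.ball 0 ε ↔
      (∀ j, ‖w j‖ < ε) ∧ ‖z‖ < ε := by
    intro w z
    rw [mem_ball_zero_iff, pi_norm_lt_iff hε, Fin.forall_fin_succ']
    simp
  have hmemV : ∀ w ∈ V, ∀ z : ℂ, (Fin.snoc w z : Fin (n + 1) → ℂ) ∈ Metric.ball 0 ε ↔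
      z ∈ Metric.ball (0 : ℂ) ε := by
    intro w hw z
    rw [hmem, mem_ball_zero_iff]
    exact ⟨fun h => h.2, fun h => ⟨fun j => (hw j).trans_le (min_le_left _ _), h⟩⟩
  have hsm : Measurable (fun q : (Fin n → ℂ) × ℂ => (Fin.snoc q.1 q.2 : Fin (n + 1) → ℂ)) := by
    rw [measurable_pi_iff]
    intro j
    refine Fin.lastCases ?_ (fun i => ?_) j
    · simpa using measurable_snd
    · simp only [Fin.snoc_castSucc]
      exact (measurable_pi_apply i).comp measurable_fst
  have hsd : ∀ w : Fin n → ℂ, Differentiable ℂ (fun z : ℂ => (Fin.snoc w z : Fin (n + 1) → ℂ)) := by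
    intro w
    rw [differentiable_pi]
    intro j
    refine Fin.lastCases ?_ (fun i => ?_) j
    · simp
    · simp
  have hfd : ∀ w ∈ V, DifferentiableOn ℂ (fun z : ℂ => f (Fin.snoc w z)) (Metric.ball 0 ε) := by
    intro w hw
    refine (hf.mono (hball.trans hUΩ)).comp (hsd w).differentiableOn ?_
    intro z hz
    exact (hmemV w hw z).2 hz
  -- measurability of the derivative
  set g : (Fin (n + 1) → ℂ) → ℂ := (Metric.ball 0 ε).indicator f with hg
  have hgm : Measurable g := by
    classical
    rw [hg, ← Set.piecewise_eq_indicator]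
    exact ContinuousOn.measurable_piecewise (hf.continuousOn.mono (hball.trans hUΩ))
      continuous_zero.continuousOn Metric.isOpen_ball.measurableSet
  set T : (Fin n → ℂ) → ℂ := fun w => (2 * Real.pi * Complex.I / σ.factorial)⁻¹ *
    ∮ z in C(0, ε / 2), (1 / (z - 0) ^ (σ + 1)) • g (Fin.snoc w z) with hT
  have hTm : StronglyMeasurable T := by
    refine StronglyMeasurable.const_mul ?_ _
    simp only [circleIntegral, intervalIntegral.integral_of_le Real.two_pi_pos.le]
    refine StronglyMeasurable.integral_prod_right' (f := fun q : (Fin n → ℂ) × ℝ =>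
      deriv (circleMap 0 (ε / 2)) q.2 • (1 / (circleMap 0 (ε / 2) q.2 - 0) ^ (σ + 1)) •
        g (Fin.snoc q.1 (circleMap 0 (ε / 2) q.2))) ?_
    refine Measurable.stronglyMeasurable ?_
    have hcm : Measurable (fun q : (Fin n → ℂ) × ℝ => circleMap 0 (ε / 2) q.2) :=
      (continuous_circleMap 0 (ε / 2)).measurable.comp measurable_snd
    have hgc : Measurable (fun q : (Fin n → ℂ) × ℝ => g (Fin.snoc q.1 (circleMap 0 (ε / 2) q.2))) :=
      hgm.comp (hsm.comp (measurable_fst.prodMk hcm))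
    simp only [deriv_circleMap, smul_eq_mul]
    fun_prop
  have hTeq : ∀ w ∈ V, T w = iteratedDeriv σ (fun z : ℂ => f (Fin.snoc w z)) 0 := by
    intro w hw
    have h1 := ((hfd w hw).mono (Metric.closedBall_subset_ball
      (half_lt_self hε))).circleIntegral_one_div_sub_center_pow_smul (half_pos hε) σ
    have h2 : (∮ z in C(0, ε / 2), (1 / (z - 0) ^ (σ + 1)) • g (Fin.snoc w z)) =
        ∮ z in C(0, ε / 2), (1 / (z - 0) ^ (σ + 1)) • f (Fin.snoc w z) := by
      refine circleIntegral.integral_congr (half_pos hε).le ?_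
      intro z hz
      have : (Fin.snoc w z : Fin (n + 1) → ℂ) ∈ Metric.ball 0 ε := by
        rw [hmemV w hw, mem_ball_zero_iff]
        rw [mem_sphere_zero_iff_norm] at hz
        linarith
      simp only [hg, Set.indicator_of_mem this]
    rw [hT]
    simp only
    rw [h2, h1, smul_eq_mul, inv_mul_cancel_left₀]
    simp [Nat.factorial_ne_zero]
  have hmeas : AEStronglyMeasurable (fun w' : Fin n → ℂ =>
          ‖iteratedDeriv σ (fun z : ℂ => f (Fin.snoc w' z)) 0‖ ^ 2 *
          Real.exp (-(⨆ j : Fin n,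
            2 * p j.castSucc * (1 - ((γ : ℝ) + 1) / p (Fin.last n)) * Real.log ‖w' j‖)))
        (volume.restrict V) := by
    have hm : Measurable (fun w' : Fin n → ℂ => ‖T w'‖ ^ 2 *
          Real.exp (-(⨆ j : Fin n,
            2 * p j.castSucc * (1 - ((γ : ℝ) + 1) / p (Fin.last n)) * Real.log ‖w' j‖))) := by
      have := hTm.measurable
      have h2 : Measurable (fun w' : Fin n → ℂ => ⨆ j : Fin n,
            2 * p j.castSucc * (1 - ((γ : ℝ) + 1) / p (Fin.last n)) * Real.log ‖w' j‖) :=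
        Measurable.iSup fun j => by fun_prop
      fun_prop
    refine hm.aestronglyMeasurable.congr ?_
    filter_upwards [ae_restrict_mem hVopen.measurableSet] with w hw
    rw [hTeq w hw]
  -- Fubini
  set F : (Fin (n + 1) → ℂ) → ℝ := (Metric.ball 0 ε).indicator
    (fun w => ‖f w‖ ^ 2 * Real.exp (-psi p w)) with hF
  have hFi : Integrable F :=
    (integrable_indicator_iff Metric.isOpen_ball.measurableSet).2 (hUint.mono_set hball)
  have hFp : Integrable (fun q : ℂ × (Fin n → ℂ) => F (Fin.snoc q.2 q.1))
      (volume.prod volume) := by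
    have h := ((volume_preserving_piFinSuccAbove (fun _ : Fin (n + 1) => ℂ)
      (Fin.last n)).symm).integrable_comp_emb
      (MeasurableEquiv.measurableEmbedding _) |>.2 hFi
    refine h.congr (ae_of_all _ fun q => ?_)
    simp only [Function.comp]
    congr 1
    exact Fin.insertNth_last' q.1 q.2
  have hK := hFp.integral_prod_right
  have hKae := hFp.prod_left_ae
  have hne : ∀ᵐ w : Fin n → ℂ, ∀ j, w j ≠ 0 := by
    rw [ae_all_iff]
    intro j
    exact Measure.ae_eval_ne (fun _ : Fin n => (volume : Measure ℂ)) j 0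
  refine ⟨V, hVopen.mem_nhds hV0, ?_⟩
  refine Integrable.mono' (hK.integrableOn.const_mul
    ((2 * Real.pi / (σ.factorial : ℝ) ^ 2 / 2 ^ (2 * σ + 2))⁻¹)) hmeas ?_
  filter_upwards [ae_restrict_mem hVopen.measurableSet, ae_restrict_of_ae hKae,
    ae_restrict_of_ae hne] with w hw hwi hw0
  have hFw : (fun z : ℂ => F (Fin.snoc w z)) = (Metric.ball (0 : ℂ) ε).indicator
      (fun z => ‖f (Fin.snoc w z)‖ ^ 2 * Real.exp (-psi p (Fin.snoc w z))) := by
    ext z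
    by_cases hz : z ∈ Metric.ball (0 : ℂ) ε
    · rw [hF, Set.indicator_of_mem hz, Set.indicator_of_mem ((hmemV w hw z).2 hz)]
    · rw [hF, Set.indicator_of_notMem hz, Set.indicator_of_notMem (mt (hmemV w hw z).1 hz)]
  simp only [hFw] at hwi ⊢
  rw [integrable_indicator_iff Metric.isOpen_ball.measurableSet] at hwi
  rw [integral_indicator Metric.isOpen_ball.measurableSet, Real.norm_of_nonneg (by positivity)]
  exact slice_bound n hn p hp f γ σ hσ ε hε hε1 w hw0
    (fun j => (hw j).trans_le (min_le_right _ _)) hγ (hfd w hw) hwi
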